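/- Let G be a finite simple graph with maximum average degree mad(G) < 5 whose maximum degree satisfies Δ(G) ≥ 9 or Δ(G) ≤ 5. Then χ_i(G) ≤ Δ(G) + 5. -/

import Mathlib

open SimpleGraph

/-- An incidence coloring of `G` with `n` colors, where `φ v u` is the color of the
incidence `(v, vu)` (meaningful when `G.Adj v u`): two distinct adjacent incidences
`(v, vu)` and `(w, wx)` receive distinct colors. Incidences `(v, e)` and `(w, f)` are
adjacent if `v = w`, or `e = f`, or the edge `vw` equals `e` or `f`. -/
def IsIncidenceColoring {V : Type*} (G : SimpleGraph V) {n : ℕ} (φ : V → V → Fin n) : Prop :=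
  ∀ ⦃v u w x : V⦄, G.Adj v u → G.Adj w x → (v, u) ≠ (w, x) →
    (v = w ∨ s(v, u) = s(w, x) ∨ s(v, w) = s(v, u) ∨ s(v, w) = s(w, x)) →
    φ v u ≠ φ w x

/-- `G` admits an incidence `(n, ℓ)`-coloring: an incidence coloring with `n` colors such
that for every vertex `v`, at most `ℓ` distinct colors appear on the incidences of the
form `(u, uv)` where `u` ranges over the neighbors of `v`. -/
def HasIncidenceColoring {V : Type*} (G : SimpleGraph V) (n ℓ : ℕ) : Prop :=
  ∃ φ : V → V → Fin n, IsIncidenceColoring G φ ∧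
    ∀ v : V, ({c : Fin n | ∃ u : V, G.Adj u v ∧ φ u v = c}).ncard ≤ ℓ

/-- The incidence chromatic number: the least `n` such that `G` admits an incidence
`n`-coloring. -/
noncomputable def incChromaticNumber {V : Type*} (G : SimpleGraph V) : ℕ :=
  sInf {n : ℕ | ∃ φ : V → V → Fin n, IsIncidenceColoring G φ}

/-- `mad(G) < q`: every nonempty subgraph `H` of `G` satisfies `2|E(H)| < q·|V(H)|`. -/
def MadLT {V : Type*} (G : SimpleGraph V) (q : ℝ) : Prop :=
  ∀ H : G.Subgraph, H.verts.Nonempty →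
    (2 * H.edgeSet.ncard : ℝ) < q * H.verts.ncard

section Transversals

variable {ι C : Type*} [Fintype ι] [DecidableEq C]

/-- If Hall's condition holds for all proper subfamilies, then either there is a system of
distinct representatives, or the whole family lives in a set that is too small. -/
theorem exists_sdr_or_exists_superset (S : ι → Finset C)
    (h : ∀ s : Finset ι, s ≠ Finset.univ → s.card ≤ (s.biUnion S).card) :
    (∃ y : ι → C, Function.Injective y ∧ ∀ j, y j ∈ S j) ∨
      ∃ U : Finset C, U.card < Fintype.card ι ∧ ∀ j, S j ⊆ U := by
  by_cases hU : (Finset.univ.biUnion S).card < Fintype.card ι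
  · exact .inr ⟨_, hU, fun j => Finset.subset_biUnion_of_mem S (Finset.mem_univ j)⟩
  · refine .inl ((Finset.all_card_le_biUnion_card_iff_exists_injective S).1 fun s => ?_)
    by_cases hs : s = Finset.univ
    · subst hs; simpa using hU
    · exact h s hs

theorem exists_sdr_or_exists_superset_of_le_card (S : ι → Finset C)
    (h : ∀ j, Fintype.card ι ≤ (S j).card + 1) :
    (∃ y : ι → C, Function.Injective y ∧ ∀ j, y j ∈ S j) ∨
      ∃ U : Finset C, U.card < Fintype.card ι ∧ ∀ j, S j ⊆ U := by
  refine exists_sdr_or_exists_superset S fun s hs => ?_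
  rcases s.eq_empty_or_nonempty with rfl | ⟨j, hj⟩
  · simp
  · have h1 := (Finset.card_lt_iff_ne_univ s).2 hs
    have h2 := Finset.card_le_card (Finset.subset_biUnion_of_mem S hj)
    have := h j
    omega

/-- A choice of colours for the arcs into and out of a new vertex, whose neighbours are indexed
by `ι`: the arc from the neighbour `j` receives `x j ∈ F j`, the arc to it `y j ∈ L j`. -/
def IsExtension (F L : ι → Finset C) (x y : ι → C) : Prop :=
  (∀ j, x j ∈ F j) ∧ (∀ j, y j ∈ L j) ∧ Function.Injective y ∧ ∀ i j, x i ≠ y j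

theorem exists_isExtension_or_of_card_image_le (hι : Fintype.card ι ≤ 4)
    {F L : ι → Finset C} (hL : ∀ j, 6 ≤ (L j).card) {x : ι → C} (hx : ∀ j, x j ∈ F j)
    (hX : (Finset.univ.image x).card ≤ 3) :
    (∃ y, IsExtension F L x y) ∨
      Fintype.card ι = 4 ∧ ∃ U : Finset C, U.card = 6 ∧ ∀ j, L j = U := by
  set X := Finset.univ.image x with hXdef
  have hS : ∀ j, (L j).card ≤ (L j \ X).card + X.card := fun j =>
    (Nat.sub_le_iff_le_add.1 (Finset.le_card_sdiff X (L j)))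
  rcases exists_sdr_or_exists_superset_of_le_card (fun j => L j \ X)
    (fun j => by have := hS j; have := hL j; omega) with ⟨y, hy, hyS⟩ | ⟨U, hU, hSU⟩
  · refine .inl ⟨y, hx, fun j => (Finset.mem_sdiff.1 (hyS j)).1, hy, fun i j hij => ?_⟩
    exact (Finset.mem_sdiff.1 (hyS j)).2 (hij ▸ Finset.mem_image_of_mem x (Finset.mem_univ i))
  · right
    have : Nonempty ι := Fintype.card_pos_iff.1 (by omega)
    have hsub : ∀ j, L j ⊆ U ∪ X := fun j a ha => by
      by_cases haX : a ∈ X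
      · exact Finset.mem_union_right _ haX
      · exact Finset.mem_union_left _ (hSU j (Finset.mem_sdiff.2 ⟨ha, haX⟩))
    have hUX := Finset.card_union_le U X
    have hj := Classical.arbitrary ι
    have h1 := Finset.card_le_card (hsub hj)
    have h2 := hL hj
    refine ⟨by omega, U ∪ X, by omega, fun j => Finset.eq_of_subset_of_card_le (hsub j) ?_⟩
    have := hL j
    omega

theorem exists_isExtension_of_card_le_three (hι : Fintype.card ι ≤ 3)
    {F L : ι → Finset C} (hF : ∀ j, (F j).Nonempty) (hL : ∀ j, 6 ≤ (L j).card) :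
    ∃ x y, IsExtension F L x y := by
  choose x hx using hF
  have := exists_isExtension_or_of_card_image_le (by omega) hL hx
    (Finset.card_image_le.trans (by simpa using hι))
  rcases this with ⟨y, hy⟩ | h
  · exact ⟨x, y, hy⟩
  · omega

/-- Four lists of at least six colours that are not all the same six-element set allow an
extension in which the set of colours of the outgoing arcs avoids a prescribed value. -/
theorem exists_isExtension_image_ne (hι : Fintype.card ι = 4)
    {F L : ι → Finset C} (hFL : ∀ j, F j ⊆ L j) (hF : ∀ j, 2 ≤ (F j).card)
    (hL : ∀ j, 6 ≤ (L j).card) (hne : ¬ ∃ U : Finset C, U.card = 6 ∧ ∀ j, L j = U)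
    (Z : Finset C) :
    ∃ x y, IsExtension F L x y ∧ Finset.univ.image y ≠ Z := by
  classical
  choose p hp q hq hpq using fun j => Finset.one_lt_card.1 (hF j)
  by_cases hd : ∃ i k, i ≠ k ∧ ¬ Disjoint (F i) (F k)
  · obtain ⟨i, k, hik, hd⟩ := hd
    obtain ⟨r, hri, hrk⟩ := Finset.not_disjoint_iff.1 hd
    by_contra! hcon
    have key : ∀ x : ι → C, (∀ j, x j ∈ F j) → x i = x k →
        (Finset.univ.image x).card ≤ 3 ∧ Z.card ≤ 4 ∧ (∀ j, L j ⊆ Z ∪ Finset.univ.image x) ∧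
          Disjoint Z (Finset.univ.image x) := by
      intro x hx hxik
      have hX : (Finset.univ.image x).card ≤ 3 := by
        have : Finset.univ.image x ⊆ (Finset.univ.erase i).image x := by
          intro a ha
          obtain ⟨j, -, rfl⟩ := Finset.mem_image.1 ha
          by_cases hj : j = i
          · exact Finset.mem_image.2 ⟨k, by simp [hik.symm], by rw [hj, hxik]⟩
          · exact Finset.mem_image_of_mem x (by simp [hj])
        refine (Finset.card_le_card this).trans (Finset.card_image_le.trans ?_)
        rw [Finset.card_erase_of_mem (Finset.mem_univ i), Finset.card_univ, hι]
      rcases exists_isExtension_or_of_card_image_le hι.le hL hx hX with ⟨y, hy⟩ | h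
      swap
      · exact absurd h.2 hne
      have hZ := hcon x y hy
      refine ⟨hX, ?_, fun j a ha => ?_, ?_⟩
      · rw [← hZ]; exact Finset.card_image_le.trans (by simp [hι])
      · by_contra haZ
        rw [Finset.mem_union, not_or] at haZ
        have hay : ∀ m, y m ≠ a := fun m hm =>
          haZ.1 (hZ ▸ Finset.mem_image.2 ⟨m, Finset.mem_univ m, hm⟩)
        have hax : ∀ m, x m ≠ a := fun m hm =>
          haZ.2 (Finset.mem_image.2 ⟨m, Finset.mem_univ m, hm⟩)
        refine haZ.1 (hcon x (Function.update y j a) ⟨hx, fun m => ?_, fun m n hmn => ?_,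
          fun m n => ?_⟩ ▸ Finset.mem_image.2 ⟨j, Finset.mem_univ j, by simp⟩)
        · by_cases hm : m = j
          · subst hm; simpa using ha
          · simpa [hm] using hy.2.1 m
        · by_cases hm : m = j <;> by_cases hn : n = j
          · rw [hm, hn]
          · subst hm; simp [hn] at hmn; exact absurd hmn.symm (hay n)
          · subst hn; simp [hm] at hmn; exact absurd hmn (hay m)
          · simp [hm, hn] at hmn; exact hy.2.2.1 hmn
        · by_cases hn : n = j
          · subst hn; simpa using hax m
          · simpa [hn] using hy.2.2.2 m n
      · rw [← hZ, Finset.disjoint_left]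
        rintro a ha hb
        obtain ⟨m, -, rfl⟩ := Finset.mem_image.1 ha
        obtain ⟨n, -, hn⟩ := Finset.mem_image.1 hb
        exact hy.2.2.2 n m hn
    obtain ⟨m, hmi, hmk⟩ : ∃ m, m ≠ i ∧ m ≠ k := by
      have : 2 < (Finset.univ : Finset ι).card := by rw [Finset.card_univ, hι]; norm_num
      obtain ⟨m, -, hm⟩ := Finset.exists_mem_notMem_of_card_lt_card
        (s := ({i, k} : Finset ι)) (t := Finset.univ) ((Finset.card_le_two).trans_lt this)
      exact ⟨m, by simp_all⟩
    let x₀ : ι → C := fun j => if j = i ∨ j = k then r else p j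
    let x₁ : ι → C := Function.update x₀ m (q m)
    have hx₀ : ∀ j, x₀ j ∈ F j := by
      intro j
      by_cases hj : j = i
      · subst hj; simpa [x₀] using hri
      · by_cases hj' : j = k
        · subst hj'; simpa [x₀] using hrk
        · simpa [x₀, hj, hj'] using hp j
    have hx₁ : ∀ j, x₁ j ∈ F j := by
      intro j
      by_cases hj : j = m
      · subst hj; simpa [x₁] using hq j
      · simpa [x₁, hj] using hx₀ j
    obtain ⟨h1, h2, h3, h4⟩ := key x₀ hx₀ (by simp [x₀])
    obtain ⟨g1, -, g3, g4⟩ := key x₁ hx₁ (by simp [x₁, x₀, hmi.symm, hmk.symm])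
    set X₀ := Finset.univ.image x₀ with hX₀
    set X₁ := Finset.univ.image x₁ with hX₁
    have hsub : ∀ j, L j ⊆ Z ∪ (X₀ ∩ X₁) := fun j a ha => by
      have := h3 j ha
      have := g3 j ha
      simp only [Finset.mem_union, Finset.mem_inter] at *
      tauto
    have hcard : (X₀ ∩ X₁).card ≤ 2 := by
      by_contra! hlt
      have e0 : X₀ ∩ X₁ = X₀ := Finset.eq_of_subset_of_card_le Finset.inter_subset_left (by omega)
      have e1 : X₀ ∩ X₁ = X₁ := Finset.eq_of_subset_of_card_le Finset.inter_subset_right (by omega)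
      have e : X₀ = X₁ := e0.symm.trans e1
      obtain ⟨j, -, hj⟩ := Finset.mem_image.1 (e ▸ Finset.mem_image_of_mem x₀ (Finset.mem_univ m) :
        x₀ m ∈ X₁)
      have hjm : j ≠ m := by
        rintro rfl
        simp [x₁, x₀, hmi, hmk] at hj
        exact hpq j hj.symm
      have hj' : x₀ j = x₀ m := by simpa [x₁, hjm] using hj
      have hik' : x₀ i = x₀ k := by simp [x₀]
      have hsmall : X₀ ⊆ (Finset.univ \ {i, m}).image x₀ := by
        intro a ha
        obtain ⟨l, -, rfl⟩ := Finset.mem_image.1 ha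
        by_cases hl : l = i
        · exact Finset.mem_image.2 ⟨k, by simp [hik.symm, hmk.symm], by rw [hl, hik']⟩
        by_cases hl' : l = m
        · by_cases hji : j = i
          · exact Finset.mem_image.2 ⟨k, by simp [hik.symm, hmk.symm], by
              rw [hl', ← hj', hji, hik']⟩
          · exact Finset.mem_image.2 ⟨j, by simp [hji, hjm], by rw [hl', hj']⟩
        · exact Finset.mem_image_of_mem x₀ (by simp [hl, hl'])
      have h5 := (Finset.card_le_card hsmall).trans Finset.card_image_le
      rw [Finset.card_sdiff_of_subset (Finset.subset_univ _), Finset.card_pair hmi.symm,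
        Finset.card_univ, hι] at h5
      have h6 := Finset.card_le_card (Finset.inter_subset_left : X₀ ∩ X₁ ⊆ X₀)
      omega
    have hU := Finset.card_union_le Z (X₀ ∩ X₁)
    refine hne ⟨Z ∪ (X₀ ∩ X₁), ?_, fun j => Finset.eq_of_subset_of_card_le (hsub j) ?_⟩
    · have : Nonempty ι := ⟨i⟩
      have := Finset.card_le_card (hsub i)
      have := hL i
      omega
    · have := hL j
      omega
  · push Not at hd
    have key : ∀ x y : ι → C, (∀ j, x j ∈ F j) → (∀ j, y j ∈ F j) → (∀ j, x j ≠ y j) →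
        IsExtension F L x y := by
      refine fun x y hx hy hxy => ⟨hx, fun j => hFL j (hy j), fun i j hij => ?_, fun i j hij => ?_⟩
      · by_contra hne
        exact Finset.disjoint_left.1 (hd i j hne) (hy i) (hij ▸ hy j)
      · by_cases hne : i = j
        · subst hne; exact hxy i hij
        · exact Finset.disjoint_left.1 (hd i j hne) (hx i) (hij ▸ hy j)
    by_cases hZ : Finset.univ.image q = Z
    · have : Nonempty ι := Fintype.card_pos_iff.1 (by omega)
      obtain ⟨i⟩ := this
      refine ⟨Function.update p i (q i), Function.update q i (p i), key _ _ ?_ ?_ ?_, fun hZ' => ?_⟩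
      · intro j
        by_cases hj : j = i
        · subst hj; simpa using hq j
        · simpa [hj] using hp j
      · intro j
        by_cases hj : j = i
        · subst hj; simpa using hp j
        · simpa [hj] using hq j
      · intro j
        by_cases hj : j = i
        · subst hj; simpa using (hpq j).symm
        · simpa [hj] using hpq j
      · have hmem : p i ∈ Finset.univ.image q := by
          rw [hZ, ← hZ']
          exact Finset.mem_image.2 ⟨i, Finset.mem_univ i, by simp⟩
        obtain ⟨j, -, hj⟩ := Finset.mem_image.1 hmem
        exact (key p q hp hq hpq).2.2.2 i j hj.symm
    · exact ⟨p, q, key p q hp hq hpq, hZ⟩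

/-- Two sets of size at least three that are disjoint inside a set of size six partition it. -/
theorem exists_pair_hitting_of_disjoint {U A B P Q : Finset C} (hU : U.card = 6)
    (hA : A ⊆ U) (hB : B ⊆ U) (hP : P ⊆ U) (hQ : Q ⊆ U)
    (hA' : 3 ≤ A.card) (hB' : 3 ≤ B.card) (hP' : 3 ≤ P.card) (hQ' : 3 ≤ Q.card)
    (hPQ : Disjoint P Q) :
    ∃ r s, (r ∈ A ∨ s ∈ A) ∧ (r ∈ B ∨ s ∈ B) ∧ (r ∈ P ∨ s ∈ P) ∧ (r ∈ Q ∨ s ∈ Q) := by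
  have hcompl : ∀ {X Y : Finset C}, X ⊆ U → Y ⊆ U → 3 ≤ X.card → 3 ≤ Y.card → Disjoint X Y →
      Y = U \ X := by
    intro X Y hX hY hX' hY' hXY
    refine Finset.eq_of_subset_of_card_le
      (fun a ha => Finset.mem_sdiff.2 ⟨hY ha, Finset.disjoint_right.1 hXY ha⟩) ?_
    rw [Finset.card_sdiff_of_subset hX]
    omega
  have hne : ∀ {X : Finset C}, 3 ≤ X.card → ∃ a, a ∈ X := fun h =>
    Finset.card_pos.1 (by omega)
  have meet : ∀ {X Y : Finset C}, ¬ Disjoint X Y → ∃ a, a ∈ X ∧ a ∈ Y := fun h =>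
    Finset.not_disjoint_iff.1 h
  obtain ⟨b, hb⟩ := hne hP'
  obtain ⟨d, hd⟩ := hne hQ'
  have eQ := hcompl hP hQ hP' hQ' hPQ
  have eP := hcompl hQ hP hQ' hP' hPQ.symm
  by_cases hPA : Disjoint P A
  · have eA := hcompl hP hA hP' hA' hPA
    by_cases hPB : Disjoint P B
    · have eB := hcompl hP hB hP' hB' hPB
      exact ⟨b, d, by rw [eA, ← eQ]; tauto, by rw [eB, ← eQ]; tauto, .inl hb, .inr hd⟩
    · obtain ⟨a, ha, ha'⟩ := meet hPB
      exact ⟨a, d, by rw [eA, ← eQ]; tauto, .inl ha', .inl ha, .inr hd⟩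
  · obtain ⟨a, ha, ha'⟩ := meet hPA
    by_cases hQB : Disjoint Q B
    · have eB := hcompl hQ hB hQ' hB' hQB
      exact ⟨a, d, .inl ha', .inl (by rw [eB, ← eP]; exact ha), .inl ha, .inr hd⟩
    · obtain ⟨e, he, he'⟩ := meet hQB
      exact ⟨a, e, .inl ha', .inr he', .inl ha, .inr he⟩

theorem exists_isExtension_of_three_le_card (hι : Fintype.card ι ≤ 4)
    {F L : ι → Finset C} (hFL : ∀ j, F j ⊆ L j) (hF : ∀ j, 3 ≤ (F j).card)
    (hL : ∀ j, 6 ≤ (L j).card) :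
    ∃ x y, IsExtension F L x y := by
  classical
  rcases hι.lt_or_eq with hι | hι
  · exact exists_isExtension_of_card_le_three (by omega)
      (fun j => Finset.card_pos.1 (by have := hF j; omega)) hL
  by_cases hne : ∃ U : Finset C, U.card = 6 ∧ ∀ j, L j = U
  swap
  · obtain ⟨x, y, h, -⟩ := exists_isExtension_image_ne hι hFL
      (fun j => by have := hF j; omega) hL hne ∅
    exact ⟨x, y, h⟩
  obtain ⟨U, hU, hLU⟩ := hne
  have hFU : ∀ j, F j ⊆ U := fun j => hLU j ▸ hFL j
  obtain ⟨r, s, hrs⟩ : ∃ r s, ∀ j, r ∈ F j ∨ s ∈ F j := by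
    obtain ⟨e⟩ := Fintype.card_eq.1 (hι.trans (Fintype.card_fin 4).symm)
    suffices h : ∃ r s, (r ∈ F (e.symm 0) ∨ s ∈ F (e.symm 0)) ∧
        (r ∈ F (e.symm 1) ∨ s ∈ F (e.symm 1)) ∧ (r ∈ F (e.symm 2) ∨ s ∈ F (e.symm 2)) ∧
        (r ∈ F (e.symm 3) ∨ s ∈ F (e.symm 3)) by
      obtain ⟨r, s, h0, h1, h2, h3⟩ := h
      refine ⟨r, s, fun j => ?_⟩
      rw [← e.symm_apply_apply j]
      generalize e j = n
      fin_cases n <;> assumption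
    by_cases hA : Disjoint (F (e.symm 2)) (F (e.symm 3))
    · exact exists_pair_hitting_of_disjoint hU (hFU _) (hFU _) (hFU _) (hFU _) (hF _) (hF _) (hF _)
        (hF _) hA
    by_cases hB : Disjoint (F (e.symm 0)) (F (e.symm 1))
    · obtain ⟨r, s, h2, h3, h0, h1⟩ := exists_pair_hitting_of_disjoint hU (hFU (e.symm 2))
        (hFU (e.symm 3)) (hFU _) (hFU _) (hF _) (hF _) (hF _) (hF _) hB
      exact ⟨r, s, h0, h1, h2, h3⟩
    obtain ⟨r, h2, h3⟩ := Finset.not_disjoint_iff.1 hA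
    obtain ⟨s, h0, h1⟩ := Finset.not_disjoint_iff.1 hB
    exact ⟨r, s, .inr h0, .inr h1, .inl h2, .inl h3⟩
  let x : ι → C := fun j => if r ∈ F j then r else s
  have hx : ∀ j, x j ∈ F j := fun j => by
    by_cases hj : r ∈ F j
    · simp [x, hj]
    · simpa [x, hj] using (hrs j).resolve_left hj
  have hX : Finset.univ.image x ⊆ {r, s} := fun a ha => by
    obtain ⟨j, -, rfl⟩ := Finset.mem_image.1 ha
    by_cases hj : r ∈ F j <;> simp [x, hj]
  have hX' := (Finset.card_le_card hX).trans Finset.card_le_two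
  have hS : ∀ j, 4 ≤ (L j \ Finset.univ.image x).card := fun j => by
    have := Nat.sub_le_iff_le_add.1 (Finset.le_card_sdiff (Finset.univ.image x) (L j))
    have := hL j
    omega
  rcases exists_sdr_or_exists_superset_of_le_card (fun j => L j \ Finset.univ.image x)
    (fun j => by have := hS j; omega) with ⟨y, hy, hyS⟩ | ⟨T, hT, hST⟩
  · refine ⟨x, y, hx, fun j => (Finset.mem_sdiff.1 (hyS j)).1, hy, fun i j hij => ?_⟩
    exact (Finset.mem_sdiff.1 (hyS j)).2 (hij ▸ Finset.mem_image_of_mem x (Finset.mem_univ i))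
  · obtain ⟨j⟩ : Nonempty ι := Fintype.card_pos_iff.1 (by omega)
    have := Finset.card_le_card (hST j)
    have := hS j
    omega

theorem exists_isExtension_of_disjoint_of_card_le_three (hι : Fintype.card ι ≤ 3)
    {F I : ι → Finset C} (hFI : ∀ j, Disjoint (F j) (I j)) (hF : ∀ j, 2 ≤ (F j).card)
    (hI : ∀ j, 4 ≤ (I j).card) :
    ∃ x y, IsExtension F I x y := by
  classical
  by_contra! hcon
  have key : ∀ x : ι → C, (∀ j, x j ∈ F j) → Fintype.card ι = 3 ∧
      ∃ T : Finset C, T.card ≤ 2 ∧ ∀ j, I j \ Finset.univ.image x = T := by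
    intro x hx
    have hS : ∀ j, 2 ≤ (I j \ Finset.univ.image x).card ∧
        Fintype.card ι ≤ (I j \ Finset.univ.image x).card + 1 := fun j => by
      have h1 : I j \ Finset.univ.image x = I j \ (Finset.univ.erase j).image x := by
        ext a
        simp only [Finset.mem_sdiff, Finset.mem_image, Finset.mem_univ, true_and,
          Finset.mem_erase, and_true, not_exists, not_and]
        refine and_congr_right fun ha => ⟨fun h m _ => h m, fun h m => ?_⟩
        by_cases hm : m = j
        · subst hm
          rintro rfl
          exact Finset.disjoint_left.1 (hFI m) (hx m) ha
        · exact h m hm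
      have h2 := Nat.sub_le_iff_le_add.1
        (Finset.le_card_sdiff ((Finset.univ.erase j).image x) (I j))
      have h3 : ((Finset.univ.erase j).image x).card ≤ _ := Finset.card_image_le
      rw [Finset.card_erase_of_mem (Finset.mem_univ j), Finset.card_univ] at h3
      rw [h1]
      have := hI j
      omega
    rcases exists_sdr_or_exists_superset_of_le_card (fun j => I j \ Finset.univ.image x)
      (fun j => (hS j).2) with ⟨y, hy, hyS⟩ | ⟨T, hT, hST⟩
    · exact absurd ⟨hx, fun j => (Finset.mem_sdiff.1 (hyS j)).1, hy, fun i j hij =>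
        (Finset.mem_sdiff.1 (hyS j)).2
          (hij ▸ Finset.mem_image_of_mem x (Finset.mem_univ i))⟩ (hcon x y)
    · obtain ⟨i⟩ : Nonempty ι := Fintype.card_pos_iff.1 (by omega)
      have h1 := Finset.card_le_card (hST i)
      have h2 := hS i
      refine ⟨by omega, T, by omega, fun j => Finset.eq_of_subset_of_card_le (hST j) ?_⟩
      have := hS j
      omega
  choose p hp q hq hpq using fun j => Finset.one_lt_card.1 (hF j)
  obtain ⟨h3, T, hTc, hT⟩ := key p hp
  obtain ⟨i, k, hik⟩ := Fintype.exists_pair_of_one_lt_card (α := ι) (by omega)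
  have hq' : ∀ j, Function.update p i (q i) j ∈ F j := fun j => by
    by_cases hj : j = i
    · subst hj; simpa using hq j
    · simpa [hj] using hp j
  obtain ⟨-, T', -, hT'⟩ := key _ hq'
  have hTT : T = T' := by
    rw [← hT i, ← hT' i]
    ext a
    simp only [Finset.mem_sdiff, Finset.mem_image, Finset.mem_univ, true_and, not_exists]
    refine and_congr_right fun ha => forall_congr' fun m => ?_
    by_cases hm : m = i
    · subst hm
      simp only [Function.update_self]
      exact iff_of_true (fun h => Finset.disjoint_left.1 (hFI m) (hp m) (h ▸ ha))
        (fun h => Finset.disjoint_left.1 (hFI m) (hq m) (h ▸ ha))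
    · simp [hm]
  have hsub : I k ⊆ T ∪ (Finset.univ \ {i, k}).image p := by
    intro a ha
    by_contra h
    rw [Finset.mem_union, not_or] at h
    have hne : ∀ m, p m = a → m = i := fun m hm => by
      by_contra hmi
      refine h.2 (Finset.mem_image.2 ⟨m, ?_, hm⟩)
      have : m ≠ k := by
        rintro rfl
        exact Finset.disjoint_left.1 (hFI m) (hp m) (hm ▸ ha)
      simp [hmi, this]
    have h1 : a ∈ Finset.univ.image p := by
      by_contra h'
      exact h.1 (hT k ▸ Finset.mem_sdiff.2 ⟨ha, h'⟩)
    have h2 : a ∈ Finset.univ.image (Function.update p i (q i)) := by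
      by_contra h'
      exact h.1 (hTT ▸ hT' k ▸ Finset.mem_sdiff.2 ⟨ha, h'⟩)
    obtain ⟨m, -, hm⟩ := Finset.mem_image.1 h1
    obtain ⟨n, -, hn⟩ := Finset.mem_image.1 h2
    have hpi : p i = a := hne m hm ▸ hm
    by_cases hni : n = i
    · subst hni
      exact hpq n (hpi.trans (by simpa using hn.symm))
    · exact hni (hne n (by simpa [hni] using hn))
  have h4 := Finset.card_le_card hsub
  have h5 := Finset.card_union_le T ((Finset.univ \ {i, k}).image p)
  have h6 : ((Finset.univ \ {i, k}).image p).card ≤ _ := Finset.card_image_le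
  rw [Finset.card_sdiff_of_subset (Finset.subset_univ _), Finset.card_pair hik,
    Finset.card_univ] at h6
  have := hI k
  omega

theorem exists_isExtension_of_disjoint_of_card_eq_four (hι : Fintype.card ι = 4)
    {F I : ι → Finset C} (hFI : ∀ j, Disjoint (F j) (I j)) (hF : ∀ j, 2 ≤ (F j).card)
    (hI : ∀ j, 4 ≤ (I j).card) {i k : ι} (hik : i ≠ k) (hi : 4 ≤ (F i).card)
    (hk : 4 ≤ (F k).card) :
    ∃ x y, IsExtension F I x y := by
  classical
  have hcard : (Finset.univ \ {i, k} : Finset ι).card = 2 := by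
    rw [Finset.card_sdiff_of_subset (Finset.subset_univ _), Finset.card_pair hik,
      Finset.card_univ, hι]
  obtain ⟨a, b, hab, hset⟩ := Finset.card_eq_two.1 hcard
  have hmem : ∀ j, j = i ∨ j = k ∨ j = a ∨ j = b := fun j => by
    have := Finset.ext_iff.1 hset j
    simp at this
    tauto
  have hai : a ≠ i ∧ a ≠ k := by
    have := Finset.ext_iff.1 hset a
    simpa using this
  have hbi : b ≠ i ∧ b ≠ k := by
    have := Finset.ext_iff.1 hset b
    simpa using this
  by_contra! hcon
  have key : ∀ r ∈ F a, ∀ s ∈ F b, I b \ {r} = I a \ {s} ∧ (I a \ {s}).card ≤ 3 := by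
    intro r hr s hs
    have hra : r ∉ I a := Finset.disjoint_left.1 (hFI a) hr
    have hsb : s ∉ I b := Finset.disjoint_left.1 (hFI b) hs
    have ha3 : 3 ≤ (I a \ {r, s}).card := by
      have h1 : I a \ {r, s} = I a \ {s} := by ext c; simp; grind
      have := Finset.le_card_sdiff {s} (I a)
      have := hI a
      rw [h1]; simp at *; omega
    have hb3 : 3 ≤ (I b \ {r, s}).card := by
      have h1 : I b \ {r, s} = I b \ {r} := by ext c; simp; grind
      have := Finset.le_card_sdiff {r} (I b)
      have := hI b
      rw [h1]; simp at *; omega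
    have h2 : ∀ j, 2 ≤ (I j \ {r, s}).card := fun j => by
      have h1 := Finset.le_card_sdiff {r, s} (I j)
      have h2 : ({r, s} : Finset C).card ≤ 2 := Finset.card_le_two
      have := hI j
      omega
    rcases exists_sdr_or_exists_superset (fun j => I j \ {r, s}) (fun t ht => by
      have h1 := (Finset.card_lt_iff_ne_univ t).2 ht
      have hsub : ∀ j ∈ t, (I j \ {r, s}).card ≤ (t.biUnion fun j => I j \ {r, s}).card :=
        fun j hj => Finset.card_le_card (Finset.subset_biUnion_of_mem (fun j => I j \ {r, s}) hj)
      by_cases hat : a ∈ t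
      · have := hsub a hat
        omega
      by_cases hbt : b ∈ t
      · have := hsub b hbt
        omega
      have htik : t ⊆ {i, k} := fun j hj => by
        rcases hmem j with rfl | rfl | rfl | rfl <;> simp_all
      have h3 := (Finset.card_le_card htik).trans Finset.card_le_two
      rcases t.eq_empty_or_nonempty with rfl | ⟨j, hj⟩
      · simp
      · exact h3.trans ((h2 j).trans (hsub j hj))) with ⟨y, hy, hyS⟩ | ⟨U, hU, hSU⟩
    · exfalso
      have hyI : ∀ j, y j ∈ I j := fun j => (Finset.mem_sdiff.1 (hyS j)).1
      have hlight : ∀ j, 4 ≤ (F j).card → ∃ z ∈ F j, ∀ m, z ≠ y m := fun j hj => by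
        have h1 : F j \ (Finset.univ.erase j).image y ⊆ F j \ Finset.univ.image y := by
          intro c hc
          simp only [Finset.mem_sdiff, Finset.mem_image, Finset.mem_univ, true_and,
            Finset.mem_erase, and_true, not_exists, not_and] at hc ⊢
          refine ⟨hc.1, fun m => ?_⟩
          by_cases hm : m = j
          · rintro rfl
            exact Finset.disjoint_left.1 (hFI j) hc.1 (hm ▸ hyI m)
          · exact hc.2 m hm
        have h2 := Finset.le_card_sdiff ((Finset.univ.erase j).image y) (F j)
        have h3 : ((Finset.univ.erase j).image y).card ≤ _ := Finset.card_image_le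
        rw [Finset.card_erase_of_mem (Finset.mem_univ j), Finset.card_univ] at h3
        obtain ⟨z, hz⟩ := Finset.card_pos.1 (show 0 < (F j \ Finset.univ.image y).card from by
          have := Finset.card_le_card h1
          omega)
        obtain ⟨hz1, hz2⟩ := Finset.mem_sdiff.1 hz
        exact ⟨z, hz1, fun m hm => hz2 (Finset.mem_image.2 ⟨m, Finset.mem_univ m, hm.symm⟩)⟩
      have hrs : ∀ m, r ≠ y m ∧ s ≠ y m := fun m => by
        have := (Finset.mem_sdiff.1 (hyS m)).2
        simp at this
        exact ⟨fun h => this.1 h.symm, fun h => this.2 h.symm⟩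
      have hall : ∀ j, ∃ z ∈ F j, ∀ m, z ≠ y m := fun j => by
        rcases hmem j with rfl | rfl | rfl | rfl
        · exact hlight _ hi
        · exact hlight _ hk
        · exact ⟨r, hr, fun m => (hrs m).1⟩
        · exact ⟨s, hs, fun m => (hrs m).2⟩
      choose x hx hxy using hall
      exact hcon x y ⟨hx, hyI, hy, hxy⟩
    · have e1 : I a \ {r, s} = U := Finset.eq_of_subset_of_card_le (hSU a) (by omega)
      have e2 : I b \ {r, s} = U := Finset.eq_of_subset_of_card_le (hSU b) (by omega)
      have h1 : I a \ {r, s} = I a \ {s} := by ext c; simp; grind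
      have h2 : I b \ {r, s} = I b \ {r} := by ext c; simp; grind
      rw [← h1, ← h2, e1, e2]
      exact ⟨rfl, by omega⟩
  obtain ⟨p, hp, q, hq, hpq⟩ := Finset.one_lt_card.1 (hF a)
  obtain ⟨s, hs⟩ := Finset.card_pos.1 (show 0 < (F b).card by have := hF b; omega)
  obtain ⟨h1, h1'⟩ := key p hp s hs
  obtain ⟨h2, -⟩ := key q hq s hs
  have hsub : I b ⊆ I a \ {s} := fun c hc => by
    by_cases hcp : c = p
    · subst hcp; rw [← h2]; simp [hc, hpq]
    · rw [← h1]; simp [hc, hcp]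
  have := Finset.card_le_card hsub
  have := hI b
  omega

end Transversals

section ArcColoring

variable {V C : Type*} {H : SimpleGraph V}

/-- The incidences at a vertex have distinct colours, and none of these colours appears on an
incidence directed towards the vertex. -/
def IsArcColoring (H : SimpleGraph V) (c : V → V → C) : Prop :=
  (∀ u v w, H.Adj u v → H.Adj u w → c u v = c u w → v = w) ∧
    ∀ u v w, H.Adj u v → H.Adj v w → c u v ≠ c v w

theorem IsArcColoring.isIncidenceColoring {n : ℕ} {c : V → V → Fin n} (hc : IsArcColoring H c) :
    IsIncidenceColoring H c := by
  intro v u w x hvu hwx hne hadj heq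
  have h1 := hvu.ne
  have h2 := hwx.ne
  rcases hadj with rfl | h | h | h
  · exact hne (by rw [hc.1 _ _ _ hvu hwx heq])
  · rcases Sym2.eq_iff.1 h with ⟨rfl, rfl⟩ | ⟨rfl, rfl⟩
    · exact hne rfl
    · exact hc.2 _ _ _ hvu hwx heq
  · rcases Sym2.eq_iff.1 h with ⟨-, rfl⟩ | ⟨rfl, rfl⟩
    · exact hc.2 _ _ _ hvu hwx heq
    · exact h1 rfl
  · rcases Sym2.eq_iff.1 h with ⟨rfl, rfl⟩ | ⟨rfl, -⟩
    · exact h2 rfl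
    · exact hc.2 _ _ _ hwx hvu heq.symm

theorem exists_isArcColoring_bot {D : ℕ} : ∃ c : V → V → Fin (D + 5), IsArcColoring ⊥ c :=
  ⟨fun _ _ => 0, by simp [IsArcColoring]⟩

theorem deleteIncidenceSet_lt {w u : V} (h : H.Adj w u) : H.deleteIncidenceSet w < H := by
  refine lt_of_le_of_ne (H.deleteIncidenceSet_le w) fun he => ?_
  rw [← he, deleteIncidenceSet_adj] at h
  exact h.2.1 rfl

end ArcColoring

section Extension

variable {V C : Type*} [Fintype V] [DecidableEq C] {H : SimpleGraph V}

/-- The neighbours of `v`, as a finset. -/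
noncomputable def nbrs (H : SimpleGraph V) (v : V) : Finset V :=
  (Set.toFinite (H.neighborSet v)).toFinset

@[simp]
theorem mem_nbrs {v u : V} : u ∈ nbrs H v ↔ H.Adj v u := by
  simp [nbrs]

/-- The colours of the incidences `(v, vu)`. -/
noncomputable def outColors (H : SimpleGraph V) (c : V → V → C) (v : V) : Finset C :=
  (nbrs H v).image (c v)

/-- The colours of the incidences `(u, uv)`. -/
noncomputable def inColors (H : SimpleGraph V) (c : V → V → C) (v : V) : Finset C :=
  (nbrs H v).image fun u => c u v

theorem mem_outColors {c : V → V → C} {v : V} {a : C} :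
    a ∈ outColors H c v ↔ ∃ u, H.Adj v u ∧ c v u = a := by
  simp [outColors]

theorem mem_inColors {c : V → V → C} {v : V} {a : C} :
    a ∈ inColors H c v ↔ ∃ u, H.Adj v u ∧ c u v = a := by
  simp [inColors]

theorem card_outColors_le (c : V → V → C) (v : V) : (outColors H c v).card ≤ (nbrs H v).card :=
  Finset.card_image_le

theorem card_inColors_le (c : V → V → C) (v : V) : (inColors H c v).card ≤ (nbrs H v).card :=
  Finset.card_image_le

theorem IsArcColoring.disjoint {c : V → V → C} (hc : IsArcColoring H c) (v : V) :
    Disjoint (inColors H c v) (outColors H c v) := by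
  rw [Finset.disjoint_left]
  intro a ha hb
  obtain ⟨u, hu, rfl⟩ := mem_inColors.1 ha
  obtain ⟨w, hw, h⟩ := mem_outColors.1 hb
  exact hc.2 u v w hu.symm hw h.symm

theorem IsArcColoring.outColors_ne {c : V → V → C} (hc : IsArcColoring H c) {u v : V}
    (huv : H.Adj u v) : outColors H c u ≠ outColors H c v := by
  intro h
  have h1 : c u v ∈ outColors H c v := h ▸ mem_outColors.2 ⟨v, huv, rfl⟩
  exact Finset.disjoint_left.1 (hc.disjoint v) (mem_inColors.2 ⟨u, huv.symm, rfl⟩) h1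

theorem card_nbrs_deleteIncidenceSet_lt {w u : V} (h : H.Adj w u) :
    (nbrs (H.deleteIncidenceSet w) u).card < (nbrs H u).card := by
  refine Finset.card_lt_card (Finset.ssubset_iff_of_subset ?_ |>.2 ⟨w, ?_, ?_⟩)
  · intro v hv
    rw [mem_nbrs, deleteIncidenceSet_adj] at hv
    exact mem_nbrs.2 hv.1
  · exact mem_nbrs.2 h.symm
  · simp [deleteIncidenceSet_adj]

theorem card_nbrs_le_of_le {H' : SimpleGraph V} (h : H' ≤ H) (v : V) :
    (nbrs H' v).card ≤ (nbrs H v).card :=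
  Finset.card_le_card fun _ hu => mem_nbrs.2 (h (mem_nbrs.1 hu))

theorem exists_isArcColoring_of_isExtension {w : V} {c : V → V → C}
    (hc : IsArcColoring (H.deleteIncidenceSet w) c) {F L : {u // u ∈ nbrs H w} → Finset C}
    {x y : {u // u ∈ nbrs H w} → C} (h : IsExtension F L x y)
    (hFout : ∀ j, Disjoint (F j) (outColors (H.deleteIncidenceSet w) c j))
    (hFin : ∀ j, Disjoint (F j) (inColors (H.deleteIncidenceSet w) c j))
    (hLout : ∀ j, Disjoint (L j) (outColors (H.deleteIncidenceSet w) c j)) :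
    ∃ c' : V → V → C, IsArcColoring H c' ∧ outColors H c' w = Finset.univ.image y ∧
      (∀ u, u ≠ w → ¬ H.Adj w u → outColors H c' u = outColors (H.deleteIncidenceSet w) c u) ∧
      (∀ u, u ≠ w → ¬ H.Adj w u → inColors H c' u = inColors (H.deleteIncidenceSet w) c u) ∧
      ∀ j : {u // u ∈ nbrs H w}, inColors H c' j ⊆ insert (y j) (inColors (H.deleteIncidenceSet w) c j) := by
  classical
  obtain ⟨hx, hy, hinj, hxy⟩ := h
  let c' : V → V → C := fun a b =>
    if a = w then (if h : b ∈ nbrs H w then y ⟨b, h⟩ else c a b)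
    else if b = w then (if h : a ∈ nbrs H w then x ⟨a, h⟩ else c a b) else c a b
  have hcw : ∀ b (h : H.Adj w b), c' w b = y ⟨b, mem_nbrs.2 h⟩ := fun b h => by simp [c', h]
  have hcx : ∀ a (h : H.Adj w a), c' a w = x ⟨a, mem_nbrs.2 h⟩ := fun a h => by
    simp [c', h, h.ne']
  have hcc : ∀ a b, a ≠ w → b ≠ w → c' a b = c a b := fun a b ha hb => by simp [c', ha, hb]
  have hadj : ∀ a b, H.Adj a b → a ≠ w → b ≠ w → (H.deleteIncidenceSet w).Adj a b :=
    fun a b h ha hb => deleteIncidenceSet_adj.2 ⟨h, ha, hb⟩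
  have hxout : ∀ a v (h : H.Adj w a), H.Adj a v → v ≠ w → x ⟨a, mem_nbrs.2 h⟩ ≠ c a v :=
    fun a v h hav hv he => Finset.disjoint_left.1 (hFout ⟨a, mem_nbrs.2 h⟩) (hx _)
      (mem_outColors.2 ⟨v, hadj a v hav h.ne' hv, he.symm⟩)
  refine ⟨c', ⟨?_, ?_⟩, ?_, ?_, ?_, ?_⟩
  · intro u v v' hv hv' he
    by_cases hu : u = w
    · subst hu
      rw [hcw _ hv, hcw _ hv'] at he
      simpa using hinj he
    · by_cases h1 : v = w <;> by_cases h2 : v' = w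
      · rw [h1, h2]
      · subst h1
        rw [hcx _ hv.symm, hcc _ _ hu h2] at he
        exact absurd he (hxout _ _ hv.symm hv' h2)
      · subst h2
        rw [hcx _ hv'.symm, hcc _ _ hu h1] at he
        exact absurd he.symm (hxout _ _ hv'.symm hv h1)
      · rw [hcc _ _ hu h1, hcc _ _ hu h2] at he
        exact hc.1 _ _ _ (hadj _ _ hv hu h1) (hadj _ _ hv' hu h2) he
  · intro u v t huv hvt he
    by_cases hu : u = w
    · subst hu
      rw [hcw _ huv] at he
      by_cases ht : t = u
      · subst ht
        rw [hcx _ huv] at he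
        exact hxy _ _ he.symm
      · rw [hcc _ _ huv.ne' ht] at he
        exact Finset.disjoint_left.1 (hLout ⟨v, mem_nbrs.2 huv⟩) (hy _)
          (mem_outColors.2 ⟨t, hadj _ _ hvt huv.ne' ht, he.symm⟩)
    · by_cases hv : v = w
      · subst hv
        rw [hcx _ huv.symm, hcw _ hvt] at he
        exact hxy _ _ he
      · by_cases ht : t = w
        · subst ht
          rw [hcx _ hvt.symm, hcc _ _ hu hv] at he
          exact Finset.disjoint_left.1 (hFin ⟨v, mem_nbrs.2 hvt.symm⟩) (hx _)
            (mem_inColors.2 ⟨u, hadj _ _ huv.symm hv hu, he⟩)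
        · rw [hcc _ _ hu hv, hcc _ _ hv ht] at he
          exact hc.2 _ _ _ (hadj _ _ huv hu hv) (hadj _ _ hvt hv ht) he
  · ext a
    rw [mem_outColors]
    simp only [Finset.mem_image, Finset.mem_univ, true_and, Subtype.exists]
    constructor
    · rintro ⟨u, hu, rfl⟩
      exact ⟨u, mem_nbrs.2 hu, (hcw u hu).symm⟩
    · rintro ⟨u, hu, rfl⟩
      exact ⟨u, mem_nbrs.1 hu, hcw u (mem_nbrs.1 hu)⟩
  · intro u hu hwu
    ext a
    rw [mem_outColors, mem_outColors]
    refine exists_congr fun v => ?_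
    by_cases hv : v = w
    · subst hv
      simp [deleteIncidenceSet_adj, H.adj_comm u, hwu]
    · simp [deleteIncidenceSet_adj, hu, hv, hcc]
  · intro u hu hwu
    ext a
    rw [mem_inColors, mem_inColors]
    refine exists_congr fun v => ?_
    by_cases hv : v = w
    · subst hv
      simp [deleteIncidenceSet_adj, H.adj_comm u, hwu]
    · simp [deleteIncidenceSet_adj, hu, hv, hcc]
  · intro j a ha
    obtain ⟨v, hv, rfl⟩ := mem_inColors.1 ha
    have hj : H.Adj w j := mem_nbrs.1 j.2
    by_cases hvw : v = w
    · subst hvw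
      rw [hcw _ hj]
      exact Finset.mem_insert_self _ _
    · rw [hcc _ _ hvw hj.ne']
      exact Finset.mem_insert_of_mem (mem_inColors.2 ⟨v, hadj _ _ hv hj.ne' hvw, rfl⟩)

end Extension

section Colorings

variable {V : Type*} [Fintype V] {D : ℕ}

theorem le_card_compl_outColors {H : SimpleGraph V} {w : V} (c : V → V → Fin (D + 5)) {k : ℕ}
    (j : {u // u ∈ nbrs H w}) (hj : (nbrs H j).card + k ≤ D) :
    6 + k ≤ (outColors (H.deleteIncidenceSet w) c j)ᶜ.card := by
  have h1 := card_nbrs_deleteIncidenceSet_lt (mem_nbrs.1 j.2)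
  have h2 := card_outColors_le (H := H.deleteIncidenceSet w) c j
  rw [Finset.card_compl, Fintype.card_fin]
  omega

theorem exists_isArcColoring_of_le_four (hD : D ≤ 4) (H : SimpleGraph V)
    (hH : ∀ v, (nbrs H v).card ≤ D) : ∃ c : V → V → Fin (D + 5), IsArcColoring H c := by
  induction H using WellFoundedLT.induction with
  | ind H ih =>
    by_cases hbot : H = ⊥
    · subst hbot; exact exists_isArcColoring_bot
    obtain ⟨w, u, hwu⟩ := ne_bot_iff_exists_adj.1 hbot
    have hle := H.deleteIncidenceSet_le w
    obtain ⟨c, hc⟩ := ih _ (deleteIncidenceSet_lt hwu)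
      fun v => (card_nbrs_le_of_le hle v).trans (hH v)
    set H' := H.deleteIncidenceSet w
    let L : {u // u ∈ nbrs H w} → Finset (Fin (D + 5)) := fun j => (outColors H' c j)ᶜ
    let F : {u // u ∈ nbrs H w} → Finset (Fin (D + 5)) := fun j => L j \ inColors H' c j
    have hL : ∀ j, 6 ≤ (L j).card := fun j =>
      le_card_compl_outColors (k := 0) c j (hH j)
    obtain ⟨x, y, h⟩ := exists_isExtension_of_three_le_card (F := F) (L := L)
      (by rw [Fintype.card_coe]; exact (hH w).trans hD) (fun j => Finset.sdiff_subset)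
      (fun j => by
        have h1 := Finset.le_card_sdiff (inColors H' c j) (L j)
        have h2 := card_inColors_le (H := H') c j
        have h3 : (nbrs H' j).card < _ := card_nbrs_deleteIncidenceSet_lt (mem_nbrs.1 j.2)
        have h4 := hH j
        have h5 : D + 5 - (nbrs H' j).card ≤ (L j).card := by
          have := card_outColors_le (H := H') c j
          simp only [L, Finset.card_compl, Fintype.card_fin]
          omega
        change 3 ≤ (L j \ inColors H' c j).card
        omega) hL
    obtain ⟨c', hc', -⟩ := exists_isArcColoring_of_isExtension hc h
      (fun j => disjoint_compl_left.mono_left Finset.sdiff_subset) (fun j => Finset.sdiff_disjoint)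
      (fun j => disjoint_compl_left)
    exact ⟨c', hc'⟩

end Colorings

section Density

variable {V : Type*} [Fintype V] {G H : SimpleGraph V}

/-- The non-isolated vertices of `H`. -/
noncomputable def supp (H : SimpleGraph V) : Finset V :=
  Finset.univ.filter fun v => (nbrs H v).Nonempty

theorem mem_supp {v : V} : v ∈ supp H ↔ (nbrs H v).Nonempty := by
  simp [supp]

theorem MadLT.sum_card_nbrs_lt (hmad : MadLT G 5) (hH : H ≤ G) (hbot : H ≠ ⊥) :
    ∑ v ∈ supp H, (nbrs H v).card < 5 * (supp H).card := by
  classical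
  let K : G.Subgraph :=
    { verts := supp H
      Adj := H.Adj
      adj_sub := fun h => hH h
      edge_vert := fun {v u} h => mem_supp.2 ⟨u, mem_nbrs.2 h⟩
      symm := H.symm }
  obtain ⟨w, u, hwu⟩ := ne_bot_iff_exists_adj.1 hbot
  have h1 := hmad K ⟨w, mem_supp.2 ⟨u, mem_nbrs.2 hwu⟩⟩
  have h2 : K.verts.ncard = (supp H).card := Set.ncard_coe_finset _
  have h3 : K.edgeSet = H.edgeFinset := by
    ext e
    induction e with
    | h a b => simp [K]
  rw [h2, h3, Set.ncard_coe_finset] at h1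
  have h4 : ∑ v, (nbrs H v).card = 2 * H.edgeFinset.card := by
    rw [← H.sum_degrees_eq_twice_card_edges]
    refine Finset.sum_congr rfl fun v _ => ?_
    rw [← H.card_neighborFinset_eq_degree]
    congr 1
    ext u
    simp
  have h5 : ∑ v ∈ supp H, (nbrs H v).card = ∑ v, (nbrs H v).card := by
    refine Finset.sum_subset (Finset.subset_univ _) fun v _ hv => ?_
    rw [mem_supp, Finset.not_nonempty_iff_eq_empty] at hv
    rw [hv, Finset.card_empty]
  rw [h5, h4]
  exact_mod_cast h1

theorem MadLT.exists_card_nbrs_le_four (hmad : MadLT G 5) (hH : H ≤ G) (hbot : H ≠ ⊥) :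
    ∃ w, (nbrs H w).Nonempty ∧ (nbrs H w).card ≤ 4 := by
  by_contra! h
  refine (hmad.sum_card_nbrs_lt hH hbot).not_ge ?_
  rw [mul_comm, ← smul_eq_mul]
  exact Finset.card_nsmul_le_sum _ _ _ fun v hv => h v (mem_supp.1 hv)

theorem MadLT.exists_light_vertex (hmad : MadLT G 5) (hH : H ≤ G) (hbot : H ≠ ⊥) {D : ℕ}
    (hD : 9 ≤ D) :
    ∃ w, (nbrs H w).Nonempty ∧ ((nbrs H w).card ≤ 3 ∨ (nbrs H w).card = 4 ∧
      ∃ i ∈ nbrs H w, ∃ k ∈ nbrs H w, i ≠ k ∧ (nbrs H i).card + 2 ≤ D ∧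
        (nbrs H k).card + 2 ≤ D) := by
  classical
  by_contra! h
  have hmin : ∀ v ∈ supp H, 4 ≤ (nbrs H v).card := fun v hv => (h v (mem_supp.1 hv)).1
  let A := (supp H).filter fun v => (nbrs H v).card = 4
  let B := (supp H).filter fun v => 8 ≤ (nbrs H v).card
  have hA : ∀ v ∈ A, 3 ≤ (B.filter fun u => H.Adj v u).card := by
    intro v hv
    obtain ⟨hv, hv4⟩ := Finset.mem_filter.1 hv
    have h1 : ((nbrs H v).filter fun u => (nbrs H u).card + 2 ≤ D).card ≤ 1 := by
      refine Finset.card_le_one.2 fun a ha b hb => ?_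
      obtain ⟨ha, ha2⟩ := Finset.mem_filter.1 ha
      obtain ⟨hb, hb2⟩ := Finset.mem_filter.1 hb
      by_contra hab
      have := (h v (mem_supp.1 hv)).2 hv4 a ha b hb hab ha2
      omega
    have h2 := Finset.card_filter_add_card_filter_not (s := nbrs H v)
      fun u => (nbrs H u).card + 2 ≤ D
    have h3 : ((nbrs H v).filter fun u => ¬ (nbrs H u).card + 2 ≤ D) ⊆
        B.filter fun u => H.Adj v u := by
      intro u hu
      obtain ⟨hu, hu2⟩ := Finset.mem_filter.1 hu
      have hvu := mem_nbrs.1 hu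
      exact Finset.mem_filter.2 ⟨Finset.mem_filter.2
        ⟨mem_supp.2 ⟨v, mem_nbrs.2 hvu.symm⟩, by omega⟩, hvu⟩
    have h4 := Finset.card_le_card h3
    omega
  have hB : ∀ u ∈ B, (A.filter fun v => H.Adj v u).card ≤ 3 * ((nbrs H u).card - 5) := by
    intro u hu
    have h8 := (Finset.mem_filter.1 hu).2
    have : (A.filter fun v => H.Adj v u).card ≤ (nbrs H u).card :=
      Finset.card_le_card fun v hv => mem_nbrs.2 (Finset.mem_filter.1 hv).2.symm
    omega
  have hcount : 3 * A.card ≤ 3 * ∑ u ∈ B, ((nbrs H u).card - 5) := by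
    calc 3 * A.card ≤ ∑ v ∈ A, (B.filter fun u => H.Adj v u).card := by
          rw [mul_comm, ← smul_eq_mul]
          exact Finset.card_nsmul_le_sum _ _ _ hA
      _ = ∑ u ∈ B, (A.filter fun v => H.Adj v u).card :=
          Finset.sum_card_bipartiteAbove_eq_sum_card_bipartiteBelow _
      _ ≤ ∑ u ∈ B, 3 * ((nbrs H u).card - 5) := Finset.sum_le_sum hB
      _ = _ := (Finset.mul_sum _ _ _).symm
  have hsum : ∑ v ∈ supp H, (5 + if 8 ≤ (nbrs H v).card then (nbrs H v).card - 5 else 0) ≤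
      ∑ v ∈ supp H, ((nbrs H v).card + if (nbrs H v).card = 4 then 1 else 0) := by
    refine Finset.sum_le_sum fun v hv => ?_
    have := hmin v hv
    split_ifs <;> omega
  rw [Finset.sum_add_distrib, Finset.sum_add_distrib, ← Finset.sum_filter, ← Finset.card_filter,
    Finset.sum_const, smul_eq_mul] at hsum
  change _ + ∑ u ∈ B, _ ≤ _ + A.card at hsum
  have := hmad.sum_card_nbrs_lt hH hbot
  omega

end Density

section Main

variable {V : Type*} [Fintype V] {G : SimpleGraph V} {D : ℕ}

theorem exists_isArcColoring_of_nine_le (hmad : MadLT G 5) (hD : 9 ≤ D) (H : SimpleGraph V)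
    (hHG : H ≤ G) (hH : ∀ v, (nbrs H v).card ≤ D) :
    ∃ c : V → V → Fin (D + 5), IsArcColoring H c ∧ ∀ v, (inColors H c v).card ≤ 4 := by
  induction H using WellFoundedLT.induction with
  | ind H ih =>
    by_cases hbot : H = ⊥
    · subst hbot
      obtain ⟨c, hc⟩ := exists_isArcColoring_bot (V := V) (D := D)
      refine ⟨c, hc, fun v => (card_inColors_le c v).trans ?_⟩
      have : nbrs (⊥ : SimpleGraph V) v = ∅ := by ext; simp
      simp [this]
    obtain ⟨w, ⟨u, hu⟩, hw⟩ := hmad.exists_light_vertex hHG hbot hD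
    have hle := H.deleteIncidenceSet_le w
    obtain ⟨c, hc, hc4⟩ := ih _ (deleteIncidenceSet_lt (mem_nbrs.1 hu)) (hle.trans hHG)
      fun v => (card_nbrs_le_of_le hle v).trans (hH v)
    set H' := H.deleteIncidenceSet w
    let L : {u // u ∈ nbrs H w} → Finset (Fin (D + 5)) := fun j => (outColors H' c j)ᶜ
    have hL : ∀ (j : {u // u ∈ nbrs H w}) k, (nbrs H j).card + k ≤ D →
        6 + k ≤ (L j).card := fun j k hk =>
      le_card_compl_outColors c j hk
    have hI : ∀ (j : {u // u ∈ nbrs H w}), ∃ I, inColors H' c j ⊆ I ∧ I ⊆ L j ∧ I.card = 4 :=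
      fun j =>
      Finset.exists_subsuperset_card_eq (Finset.subset_compl_iff_disjoint_right.2 (hc.disjoint j))
        (hc4 j) (by have := hL j 0 (hH j); omega)
    choose I hinI hIL hI4 using hI
    let F : {u // u ∈ nbrs H w} → Finset (Fin (D + 5)) := fun j => L j \ I j
    have hF : ∀ (j : {u // u ∈ nbrs H w}) k, (nbrs H j).card + k ≤ D →
        2 + k ≤ (F j).card := fun j k hk => by
      have h1 := hL j k hk
      have h2 : (F j).card = _ := Finset.card_sdiff_of_subset (hIL j)
      have h3 := hI4 j
      omega
    have hFI : ∀ j, Disjoint (F j) (I j) := fun j => Finset.sdiff_disjoint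
    obtain ⟨x, y, h⟩ : ∃ x y, IsExtension F I x y := by
      rcases hw with hw | ⟨hw, i, hi, k, hk, hik, hiD, hkD⟩
      · exact exists_isExtension_of_disjoint_of_card_le_three (by simpa using hw) hFI
          (fun j => hF j 0 (hH j)) fun j => (hI4 j).ge
      · exact exists_isExtension_of_disjoint_of_card_eq_four (by simpa using hw) hFI
          (fun j => hF j 0 (hH j)) (fun j => (hI4 j).ge) (i := ⟨i, hi⟩) (k := ⟨k, hk⟩)
          (by simpa using hik) (hF ⟨i, hi⟩ 2 hiD) (hF ⟨k, hk⟩ 2 hkD)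
    obtain ⟨c', hc', -, -, hcin, hcj⟩ := exists_isArcColoring_of_isExtension hc h
      (fun j => disjoint_compl_left.mono_left Finset.sdiff_subset)
      (fun j => (hFI j).mono_right (hinI j))
      (fun j => disjoint_compl_left.mono_left (hIL j))
    refine ⟨c', hc', fun v => ?_⟩
    by_cases hvw : v = w
    · subst hvw
      refine (card_inColors_le _ _).trans ?_
      omega
    · by_cases hwv : H.Adj w v
      · rw [← hI4 ⟨v, mem_nbrs.2 hwv⟩]
        exact Finset.card_le_card ((hcj ⟨v, mem_nbrs.2 hwv⟩).trans
          (Finset.insert_subset (h.2.1 _) (hinI _)))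
      · rw [hcin v hvw hwv]
        exact hc4 v

/-- Arc colorings with `10` colours, when the maximum degree is at most `5`; any single vertex
of degree `4` can be required to see a set of colours different from that of a given vertex. -/
theorem exists_isArcColoring_of_five (hmad : MadLT G 5) (H : SimpleGraph V)
    (hHG : H ≤ G) (hH : ∀ v, (nbrs H v).card ≤ 5) :
    (∃ c : V → V → Fin (5 + 5), IsArcColoring H c) ∧
      ∀ u v, u ≠ v → (nbrs H u).card = 4 →
        ∃ c : V → V → Fin (5 + 5), IsArcColoring H c ∧ outColors H c u ≠ outColors H c v := by
  induction H using WellFoundedLT.induction with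
  | ind H ih =>
    have key : ∀ w v, w ≠ v → (nbrs H w).Nonempty → (nbrs H w).card ≤ 4 →
        ∃ c : V → V → Fin (5 + 5), IsArcColoring H c ∧
          ((nbrs H w).card = 4 → outColors H c w ≠ outColors H c v) := by
      intro w v hwv ⟨u, hu⟩ hw
      have hle := H.deleteIncidenceSet_le w
      obtain ⟨ih1, ih2⟩ := ih _ (deleteIncidenceSet_lt (mem_nbrs.1 hu)) (hle.trans hHG)
        fun v => (card_nbrs_le_of_le hle v).trans (hH v)
      set H' := H.deleteIncidenceSet w
      have hlt : ∀ j : {u // u ∈ nbrs H w}, (nbrs H' j).card ≤ 4 := fun j =>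
        Nat.le_of_lt_succ ((card_nbrs_deleteIncidenceSet_lt (mem_nbrs.1 j.2)).trans_le (hH j))
      have hL : ∀ (c : V → V → Fin (5 + 5)) (j : {u // u ∈ nbrs H w}),
          6 ≤ ((outColors H' c j)ᶜ).card := fun c j =>
        le_card_compl_outColors (k := 0) c j (hH j)
      have hF : ∀ (c : V → V → Fin (5 + 5)) (j : {u // u ∈ nbrs H w}),
          2 ≤ ((outColors H' c j)ᶜ \ inColors H' c j).card := fun c j => by
        have h1 := Finset.le_card_sdiff (inColors H' c j) (outColors H' c j)ᶜ
        have h2 := card_inColors_le (H := H') c j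
        have h3 := hlt j
        have h4 := hL c j
        omega
      by_cases hw4 : (nbrs H w).card = 4
      · obtain ⟨a, ha, b, hb, hab⟩ := Finset.one_lt_card.1 (by omega : 1 < (nbrs H w).card)
        obtain ⟨c, hc, hcne⟩ : ∃ c : V → V → Fin (5 + 5), IsArcColoring H' c ∧
            ¬ ∃ U : Finset (Fin (5 + 5)), U.card = 6 ∧
              ∀ j : {u // u ∈ nbrs H w}, (outColors H' c j)ᶜ = U := by
          by_cases ha4 : (nbrs H' a).card = 4
          · obtain ⟨c, hc, hcab⟩ := ih2 a b hab ha4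
            refine ⟨c, hc, fun ⟨U, _, hU⟩ => hcab ?_⟩
            exact compl_injective ((hU ⟨a, ha⟩).trans (hU ⟨b, hb⟩).symm)
          · obtain ⟨c, hc⟩ := ih1
            refine ⟨c, hc, fun ⟨U, hU6, hU⟩ => ?_⟩
            have h1 := hlt ⟨a, ha⟩
            have h2 := card_outColors_le (H := H') c a
            have h3 := congrArg Finset.card (hU ⟨a, ha⟩)
            rw [Finset.card_compl, Fintype.card_fin] at h3
            simp only at h1 h3
            omega
        obtain ⟨x, y, h, hZ⟩ := exists_isExtension_image_ne
          (F := fun j : {u // u ∈ nbrs H w} => (outColors H' c j)ᶜ \ inColors H' c j)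
          (L := fun j : {u // u ∈ nbrs H w} => (outColors H' c j)ᶜ)
          (by simpa using hw4) (fun j => Finset.sdiff_subset) (hF c) (hL c) hcne
          (outColors H' c v)
        obtain ⟨c', hc', hcw, hcout, -⟩ := exists_isArcColoring_of_isExtension hc h
          (fun j => disjoint_compl_left.mono_left Finset.sdiff_subset)
          (fun j => Finset.sdiff_disjoint) (fun j => disjoint_compl_left)
        refine ⟨c', hc', fun _ => ?_⟩
        by_cases hadj : H.Adj w v
        · exact hc'.outColors_ne hadj
        · rw [hcw, hcout v hwv.symm hadj]
          exact hZ
      · obtain ⟨c, hc⟩ := ih1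
        obtain ⟨x, y, h⟩ := exists_isExtension_of_card_le_three
          (F := fun j : {u // u ∈ nbrs H w} => (outColors H' c j)ᶜ \ inColors H' c j)
          (L := fun j : {u // u ∈ nbrs H w} => (outColors H' c j)ᶜ)
          (by rw [Fintype.card_coe]; omega)
          (fun j => Finset.card_pos.1 (Nat.zero_lt_two.trans_le (hF c j))) (hL c)
        obtain ⟨c', hc', -⟩ := exists_isArcColoring_of_isExtension hc h
          (fun j => disjoint_compl_left.mono_left Finset.sdiff_subset)
          (fun j => Finset.sdiff_disjoint) (fun j => disjoint_compl_left)
        exact ⟨c', hc', fun h => absurd h hw4⟩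
    constructor
    · by_cases hbot : H = ⊥
      · subst hbot
        exact exists_isArcColoring_bot
      · obtain ⟨w, ⟨u, hu⟩, hw⟩ := hmad.exists_card_nbrs_le_four hHG hbot
        obtain ⟨c, hc, -⟩ := key w u (mem_nbrs.1 hu).ne ⟨u, hu⟩ hw
        exact ⟨c, hc⟩
    · intro u v huv hu
      obtain ⟨c, hc, hne⟩ := key u v huv (Finset.card_pos.1 (by omega)) hu.le
      exact ⟨c, hc, hne hu⟩

end Main

theorem incidence_chromatic_mad_lt_five {V : Type*} [Fintype V] (G : SimpleGraph V)
    [DecidableRel G.Adj] (hmad : MadLT G 5) (hΔ : 9 ≤ G.maxDegree ∨ G.maxDegree ≤ 5) :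
    incChromaticNumber G ≤ G.maxDegree + 5 := by
  have hdeg : ∀ v, (nbrs G v).card ≤ G.maxDegree := fun v => by
    refine le_trans (le_of_eq ?_) (G.degree_le_maxDegree v)
    rw [← G.card_neighborFinset_eq_degree]
    congr 1
    ext u
    simp
  obtain ⟨c, hc⟩ : ∃ c : V → V → Fin (G.maxDegree + 5), IsArcColoring G c := by
    generalize G.maxDegree = D at hΔ hdeg
    rcases hΔ with hD | hD
    · obtain ⟨c, hc, -⟩ := exists_isArcColoring_of_nine_le hmad hD G le_rfl hdeg
      exact ⟨c, hc⟩
    · rcases hD.lt_or_eq with hD | rfl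
      · exact exists_isArcColoring_of_le_four (Nat.le_of_lt_succ hD) G hdeg
      · exact (exists_isArcColoring_of_five hmad G le_rfl hdeg).1
  exact Nat.sInf_le ⟨c, hc.isIncidenceColoring⟩
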